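/- Let (X,ρ) be a compact metric space with an Ahlfors δ₀-regular Borel measure μ. For each n ∈ ℕ let E_n ⊆ X be an open set and μ_n a Borel probability measure with μ_n(X∖E_n) = 0. Suppose there exist constants C ≥ 1 and s ≥ 0 such that (i) C⁻¹ ≤ liminf_n μ_n(B)/μ(B) ≤ limsup_n μ_n(B)/μ(B) ≤ C for every ball B ⊆ X, and (ii) μ_n(B) ≤ C·r^s for every n ∈ ℕ and every ball B ⊆ X of radius r. Then dim_H ( limsup_n E_n ) ≥ s. -/

import Mathlib

open Filter MeasureTheory Set Metric
open scoped ENNReal NNReal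
open scoped Topology

/-!
Move mass instead of selecting it. Given a probability measure `lam` and a small radius `r`, spread
the mass that `lam` puts at `x` over `ball x r` according to `ν n`. For `n` large the result lives
on `E n`, is close to `lam`, and satisfies `lam' (ball z ρ) ≤ M * ρ ^ t`, `t < s`, with almost the
same constant as `lam`: at scales `ρ ≥ r` the ball bound of `lam` is inherited, at scales `ρ ≤ r`
comparability of `ν n` with `μ` gives an exponent `s` bound, and at scales too small for the
comparability to have set in, the exponent `s` bound of `ν n` takes over. The loss of exponent from
`s` to `t` absorbs all constants.

Hence, in the weakly closed hull of the measures satisfying the exponent `t` bound, the measures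
carried by `⋃ n ≥ N, E n` form a dense Gδ set for every `N`. By the Baire category theorem some
measure of this hull is carried by `limsup E`, and the mass distribution principle applies to it.
-/

section BallBound

variable {X : Type*} [PseudoMetricSpace X] [MeasurableSpace X] {ν : Measure X} {A s t : ℝ}

/-- The growth condition `ν (B(x, r)) ≤ A r ^ s` of the mass distribution principle, also known as
upper `s`-regularity. -/
def HasBallBound (ν : Measure X) (A s : ℝ) : Prop :=
  ∀ (x : X) (r : ℝ), 0 < r → ν (ball x r) ≤ ENNReal.ofReal (A * r ^ s)

namespace HasBallBound

theorem pos (h : HasBallBound ν A s) (hν : ν ≠ 0) : 0 < A := by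
  by_contra! hA
  have hnull : ∀ x (n : ℕ), ν (ball x (n + 1)) = 0 := fun x n =>
    le_zero_iff.1 <| (h x (n + 1) (by positivity)).trans_eq <|
      ENNReal.ofReal_of_nonpos (mul_nonpos_of_nonpos_of_nonneg hA (by positivity))
  refine hν (Measure.measure_univ_eq_zero.1 ?_)
  obtain hX | ⟨⟨x⟩⟩ := isEmpty_or_nonempty X
  · rw [univ_eq_empty_iff.2 hX, measure_empty]
  · rw [← iUnion_ball_nat_succ x]
    exact measure_iUnion_null (hnull x)

theorem mono_const {B : ℝ} (h : HasBallBound ν A s) (hAB : A ≤ B) : HasBallBound ν B s :=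
  fun x r hr => (h x r hr).trans (by gcongr)

theorem mono_exponent [IsProbabilityMeasure ν] (h : HasBallBound ν A s) (ht : 0 ≤ t)
    (hts : t ≤ s) : HasBallBound ν (max A 1) t := by
  intro x r hr
  rcases le_total r 1 with hr1 | hr1
  · refine (h x r hr).trans (ENNReal.ofReal_le_ofReal ?_)
    exact mul_le_mul (le_max_left A 1) (Real.rpow_le_rpow_of_exponent_ge hr hr1 hts)
      (by positivity) (by positivity)
  · refine prob_le_one.trans (ENNReal.one_le_ofReal.2 ?_)
    exact one_le_mul_of_one_le_of_one_le (le_max_right A 1) (Real.one_le_rpow hr1 ht)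

theorem measure_closedBall_le (h : HasBallBound ν A t) (ht : 0 ≤ t) (x : X) {r : ℝ} (hr : 0 ≤ r) :
    ν (closedBall x r) ≤ ENNReal.ofReal (A * r ^ t) := by
  have hlim : Tendsto (fun δ : ℝ => ENNReal.ofReal (A * δ ^ t)) (𝓝[>] r)
      (𝓝 (ENNReal.ofReal (A * r ^ t))) :=
    ENNReal.tendsto_ofReal <| tendsto_nhdsWithin_of_tendsto_nhds <|
      (Real.continuousAt_rpow_const r t (Or.inr ht)).const_mul A
  refine ge_of_tendsto hlim ?_
  filter_upwards [self_mem_nhdsWithin] with δ hδ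
  exact (measure_mono (closedBall_subset_ball hδ)).trans (h x δ (hr.trans_lt hδ))

theorem measure_le_ediam_rpow (h : HasBallBound ν A t) (hA : 0 ≤ A) (ht : 0 ≤ t) {U : Set X}
    (hne : U.Nonempty) (hU : ediam U ≠ ∞) : ν U ≤ ENNReal.ofReal A * ediam U ^ t := by
  obtain ⟨x, hx⟩ := hne
  calc ν U ≤ ν (closedBall x (diam U)) :=
        measure_mono fun y hy => dist_le_diam_of_mem' hU hy hx
    _ ≤ ENNReal.ofReal (A * diam U ^ t) := h.measure_closedBall_le ht x diam_nonneg
    _ = ENNReal.ofReal A * ediam U ^ t := by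
        rw [ENNReal.ofReal_mul hA, ← ENNReal.ofReal_rpow_of_nonneg diam_nonneg ht, Metric.diam,
          ENNReal.ofReal_toReal hU]

/-- The mass distribution principle. -/
theorem le_dimH {X : Type*} [MetricSpace X] [MeasurableSpace X] [BorelSpace X] {ν : Measure X}
    {A : ℝ} {t : ℝ≥0} (h : HasBallBound ν A t) {S : Set X} (hS : ν S ≠ 0) : t ≤ dimH S := by
  have hA : 0 < A := h.pos fun hν => hS (by simp [hν])
  have hA₀ : ENNReal.ofReal A ≠ 0 := (ENNReal.ofReal_pos.2 hA).ne'
  have hle : (ENNReal.ofReal A)⁻¹ • ν ≤ μH[t] := by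
    refine Measure.le_hausdorffMeasure t _ 1 one_pos fun U hU => ?_
    rcases U.eq_empty_or_nonempty with rfl | hne
    · simp
    rw [Measure.smul_apply, smul_eq_mul, ENNReal.inv_mul_le_iff hA₀ ENNReal.ofReal_ne_top]
    exact h.measure_le_ediam_rpow hA.le t.2 hne (ne_top_of_le_ne_top ENNReal.one_ne_top hU)
  refine le_dimH_of_hausdorffMeasure_ne_zero fun hzero => hS ?_
  simpa [hzero] using hle S

end HasBallBound

end BallBound

section PowerComparison

theorem eventually_mul_rpow_le_mul_rpow {t s : ℝ} (hts : t < s) (A : ℝ) {M : ℝ} (hM : 0 < M) :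
    ∀ᶠ r : ℝ in 𝓝[>] 0, A * r ^ s ≤ M * r ^ t := by
  have hst : 0 < s - t := sub_pos.2 hts
  have hlim : Tendsto (fun r : ℝ => A * r ^ (s - t)) (𝓝[>] 0) (𝓝 0) := by
    simpa [Real.zero_rpow hst.ne'] using tendsto_nhdsWithin_of_tendsto_nhds
      ((Real.continuousAt_rpow_const 0 (s - t) (Or.inr hst.le)).const_mul A).tendsto
  filter_upwards [hlim.eventually_le_const hM, self_mem_nhdsWithin] with r hr hr₀
  have hsplit : r ^ s = r ^ (s - t) * r ^ t := by rw [← Real.rpow_add hr₀, sub_add_cancel]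
  rw [hsplit, ← mul_assoc]
  exact mul_le_mul_of_nonneg_right hr (Real.rpow_nonneg (le_of_lt hr₀) t)

theorem exists_forall_mul_rpow_le_mul_rpow {t s : ℝ} (hts : t < s) (A : ℝ) {M : ℝ} (hM : 0 < M) :
    ∃ σ > 0, ∀ r ∈ Ioc 0 σ, A * r ^ s ≤ M * r ^ t :=
  mem_nhdsGT_iff_exists_Ioc_subset.1 (eventually_mul_rpow_le_mul_rpow hts A hM)

theorem le_of_eventually_mul_rpow_le {s δ a A : ℝ} (ha : 0 < a)
    (h : ∀ᶠ r : ℝ in 𝓝[>] 0, a * r ^ δ ≤ A * r ^ s) : s ≤ δ := by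
  by_contra! hδs
  obtain ⟨r, hlow, hup, hr⟩ := (h.and ((eventually_mul_rpow_le_mul_rpow hδs A (half_pos ha)).and
    self_mem_nhdsWithin)).exists
  nlinarith [Real.rpow_pos_of_pos hr δ]

end PowerComparison

section RatioLimits

variable {ι : Type*} {l : Filter ι} {u : ι → ℝ≥0∞} {m C c : ℝ≥0∞}

theorem eventually_le_mul_of_limsup_div_le (h : limsup (fun i => u i / m) l ≤ C) (hCc : C < c)
    (hc : c ≠ ∞) : ∀ᶠ i in l, u i ≤ c * m := by
  filter_upwards [eventually_lt_of_limsup_lt (h.trans_lt hCc)] with i hi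
  exact (ENNReal.div_le_iff_le_mul (Or.inr hc) (Or.inr hCc.ne_bot)).1 hi.le

theorem eventually_le_mul_of_inv_le_liminf_div (h : C⁻¹ ≤ liminf (fun i => u i / m) l)
    (hCc : C < c) (hc : c ≠ ∞) : ∀ᶠ i in l, m ≤ c * u i := by
  filter_upwards [eventually_lt_of_lt_liminf ((ENNReal.inv_lt_inv.2 hCc).trans_le h)] with i hi
  exact (ENNReal.inv_mul_le_iff hCc.ne_bot hc).1 (ENNReal.mul_lt_of_lt_div hi).le

theorem pos_of_liminf_div_pos_of_limsup_div_lt_top [l.NeBot]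
    (hinf : 0 < liminf (fun i => u i / m) l) (hsup : limsup (fun i => u i / m) l < ∞) : 0 < m := by
  obtain ⟨i, hi, hi'⟩ :=
    ((eventually_lt_of_lt_liminf hinf).and (eventually_lt_of_limsup_lt hsup)).exists
  refine pos_iff_ne_zero.2 fun hm => ?_
  rw [hm] at hi hi'
  have hu : u i ≠ 0 := fun hu => by simp [hu] at hi
  exact hi'.ne (ENNReal.div_zero hu)

end RatioLimits

section Comparability

variable {X ι : Type*} [PseudoMetricSpace X] [MeasurableSpace X] {l : Filter ι}

theorem eventually_forall_measure_ball_le_measure_ball_two_mul [CompactSpace X]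
    {κ ν : ι → Measure X}
    (h : ∀ (x : X) (r : ℝ), 0 < r → ∀ᶠ i in l, κ i (ball x r) ≤ ν i (ball x r)) {a : ℝ}
    (ha : 0 < a) (b : ℝ) :
    ∀ᶠ i in l, ∀ x, ∀ r ∈ Icc a b, κ i (ball x r) ≤ ν i (ball x (2 * r)) := by
  suffices hK : ∀ᶠ q in l ×ˢ 𝓝ˢ (univ ×ˢ Icc a b : Set (X × ℝ)),
      κ q.1 (ball q.2.1 q.2.2) ≤ ν q.1 (ball q.2.1 (2 * q.2.2)) from
    hK.curry.mono fun i hi x r hr => hi.self_of_nhdsSet (x, r) ⟨mem_univ x, hr⟩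
  refine (isCompact_univ.prod isCompact_Icc).mem_prod_nhdsSet_of_forall ?_
  rintro ⟨x, r⟩ ⟨-, hr, -⟩
  have hr₀ : 0 < r := ha.trans_le hr
  have hnear : ∀ᶠ p : X × ℝ in 𝓝 (x, r), dist p.1 x < r / 8 ∧ dist p.2 r < r / 8 :=
    prod_mem_nhds (ball_mem_nhds x (by positivity)) (ball_mem_nhds r (by positivity))
  filter_upwards [(h x (5 * r / 4) (by positivity)).prod_mk hnear]
  rintro ⟨i, y, ρ⟩ ⟨hi, hy, hρ⟩
  rw [Real.dist_eq, abs_lt] at hρ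
  calc κ i (ball y ρ) ≤ κ i (ball x (5 * r / 4)) := by
        gcongr; exact ball_subset_ball' (by linarith)
    _ ≤ ν i (ball x (5 * r / 4)) := hi
    _ ≤ ν i (ball y (2 * ρ)) := by
        gcongr; exact ball_subset_ball' (by rw [dist_comm]; linarith)

theorem exists_pos_forall_le_measure_ball [CompactSpace X] {μ : Measure X}
    (hμ : ∀ (x : X) (r : ℝ), 0 < r → 0 < μ (ball x r)) {r : ℝ} (hr : 0 < r) :
    ∃ m > 0, ∀ x, m ≤ μ (ball x r) := by
  obtain ⟨T, -, hTfin, hT⟩ := finite_cover_balls_of_compact (isCompact_univ (X := X)) (half_pos hr)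
  refine ⟨hTfin.toFinset.inf fun y => μ (ball y (r / 2)),
    (Finset.lt_inf_iff ENNReal.zero_lt_top).2 fun y _ => hμ y _ (half_pos hr), fun x => ?_⟩
  obtain ⟨y, hyT, hxy⟩ := mem_iUnion₂.1 (hT (mem_univ x))
  refine (Finset.inf_le (hTfin.mem_toFinset.2 hyT)).trans (measure_mono (ball_subset_ball' ?_))
  rw [dist_comm]
  linarith [mem_ball.1 hxy]

/-- The measures `ν i` are eventually, on each ball separately, comparable to a measure `μ` that
charges all balls: the two-sided bound on the limits of `ν i (B) / μ (B)` without ratios. -/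
structure EventuallyComparableOnBalls (ν : ι → Measure X) (μ : Measure X) (c : ℝ≥0)
    (l : Filter ι) : Prop where
  pos : ∀ (x : X) (r : ℝ), 0 < r → 0 < μ (ball x r)
  le : ∀ (x : X) (r : ℝ), 0 < r → ∀ᶠ i in l, ν i (ball x r) ≤ c * μ (ball x r)
  ge : ∀ (x : X) (r : ℝ), 0 < r → ∀ᶠ i in l, μ (ball x r) ≤ c * ν i (ball x r)

namespace EventuallyComparableOnBalls

variable {ν : ι → Measure X} {μ : Measure X} {c : ℝ≥0}

theorem of_liminf_limsup [l.NeBot] (C : ℝ≥0)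
    (h : ∀ (x : X) (r : ℝ), 0 < r →
      (C : ℝ≥0∞)⁻¹ ≤ liminf (fun i => ν i (ball x r) / μ (ball x r)) l ∧
        limsup (fun i => ν i (ball x r) / μ (ball x r)) l ≤ C) :
    EventuallyComparableOnBalls ν μ (C + 1) l := by
  have hC : (C : ℝ≥0∞) < (C + 1 : ℝ≥0) := mod_cast lt_add_one C
  exact
    { pos x r hr := pos_of_liminf_div_pos_of_limsup_div_lt_top
        ((ENNReal.inv_pos.2 ENNReal.coe_ne_top).trans_le (h x r hr).1)
        ((h x r hr).2.trans_lt ENNReal.coe_lt_top)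
      le x r hr := eventually_le_mul_of_limsup_div_le (h x r hr).2 hC ENNReal.coe_ne_top
      ge x r hr := eventually_le_mul_of_inv_le_liminf_div (h x r hr).1 hC ENNReal.coe_ne_top }

variable [CompactSpace X]

theorem eventually_forall_measure_ball_le (h : EventuallyComparableOnBalls ν μ c l) {a : ℝ}
    (ha : 0 < a) (b : ℝ) :
    ∀ᶠ i in l, ∀ x, ∀ r ∈ Icc a b, ν i (ball x r) ≤ c * μ (ball x (2 * r)) := by
  simpa using eventually_forall_measure_ball_le_measure_ball_two_mul (ν := fun _ => c • μ)
    (by simpa using! h.le) ha b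

theorem eventually_forall_le_measure_ball (h : EventuallyComparableOnBalls ν μ c l) {r : ℝ}
    (hr : 0 < r) : ∀ᶠ i in l, ∀ x, μ (ball x (r / 2)) ≤ c * ν i (ball x r) := by
  have huniform := eventually_forall_measure_ball_le_measure_ball_two_mul (κ := fun _ => μ)
    (ν := fun i => c • ν i) (by simpa using! h.ge) (half_pos hr) (r / 2)
  filter_upwards [huniform] with i hi x
  simpa [mul_div_cancel₀] using! hi x (r / 2) ⟨le_rfl, le_rfl⟩

theorem exists_pos_eventually_forall_le_measure_ball (h : EventuallyComparableOnBalls ν μ c l)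
    {r : ℝ} (hr : 0 < r) : ∃ b > 0, ∀ᶠ i in l, ∀ x, b ≤ ν i (ball x r) := by
  obtain ⟨m, hm, hmμ⟩ := exists_pos_forall_le_measure_ball h.pos (half_pos hr)
  refine ⟨m / c, ENNReal.div_pos hm.ne' ENNReal.coe_ne_top, ?_⟩
  filter_upwards [h.eventually_forall_le_measure_ball hr] with i hi x
  exact ENNReal.div_le_of_le_mul' ((hmμ x).trans (hi x))

end EventuallyComparableOnBalls

end Comparability

section LowerHomogeneity

variable {X : Type*} [PseudoMetricSpace X] [MeasurableSpace X]

/-- `μ` has lower regularity dimension at least `s`, locally uniformly: shrinking a small ball from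
radius `r` to radius `ρ` with the same centre decreases its measure at least by a constant times
`(ρ / r) ^ s`. -/
def IsUnifLocLowerHomogeneous (μ : Measure X) (s : ℝ) : Prop :=
  ∃ K : ℝ≥0, ∀ᶠ r in 𝓝[>] (0 : ℝ), ∀ x, ∀ ρ ∈ Ioc 0 r,
    μ (ball x ρ) ≤ K * ENNReal.ofReal ((ρ / r) ^ s) * μ (ball x r)

/-- At every small scale `r` and for all `i` far enough along `l`, the measure `ν i` satisfies the
decay of `IsUnifLocLowerHomogeneous` from radius `r` down to any prescribed radius `a`. The balls
need only be close to each other, which is what spreading mass over balls requires. -/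
def AsymptoticallyLowerHomogeneous {ι : Type*} (ν : ι → Measure X) (l : Filter ι) (K : ℝ≥0)
    (s : ℝ) : Prop :=
  ∀ᶠ r in 𝓝[>] (0 : ℝ), ∀ a > 0, ∀ᶠ i in l, ∀ x z, dist x z ≤ 2 * r → ∀ ρ ∈ Icc a r,
    ν i (ball z ρ) ≤ K * ENNReal.ofReal ((ρ / r) ^ s) * ν i (ball x r)

theorem exists_eventually_forall_measure_ball_le_mul_half (μ : Measure X)
    [IsUnifLocDoublingMeasure μ] :
    ∃ D : ℝ≥0, ∀ᶠ r in 𝓝[>] (0 : ℝ), ∀ x, μ (ball x (4 * r)) ≤ D * μ (ball x (r / 2)) := by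
  refine ⟨IsUnifLocDoublingMeasure.scalingConstantOf μ 16, ?_⟩
  filter_upwards [eventually_nhdsGT_zero_mul_left (show (0 : ℝ) < 1 / 4 by norm_num)
    (IsUnifLocDoublingMeasure.eventually_measure_le_scaling_constant_mul μ 16),
    self_mem_nhdsWithin] with r hr hr₀ x
  have hr₀ : 0 < r := hr₀
  calc μ (ball x (4 * r)) ≤ μ (closedBall x (16 * (1 / 4 * r))) := by
        gcongr; exact ball_subset_closedBall.trans (closedBall_subset_closedBall (by linarith))
    _ ≤ _ := hr x
    _ ≤ _ := by gcongr; exact closedBall_subset_ball (by linarith)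

theorem EventuallyComparableOnBalls.exists_asymptoticallyLowerHomogeneous [CompactSpace X]
    {ι : Type*} {l : Filter ι} {ν : ι → Measure X} {μ : Measure X} {c : ℝ≥0} {s : ℝ}
    (h : EventuallyComparableOnBalls ν μ c l) [IsUnifLocDoublingMeasure μ]
    (hμ : IsUnifLocLowerHomogeneous μ s) : ∃ K, AsymptoticallyLowerHomogeneous ν l K s := by
  obtain ⟨K, hK⟩ := hμ
  obtain ⟨D, hD⟩ := exists_eventually_forall_measure_ball_le_mul_half μ
  refine ⟨c * K * D * c, ?_⟩
  filter_upwards [eventually_nhdsGT_zero_mul_left two_pos hK, hD, self_mem_nhdsWithin]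
    with r hKr hDr hr a ha
  filter_upwards [h.eventually_forall_measure_ball_le ha r, h.eventually_forall_le_measure_ball hr]
    with i hle hge x z hxz ρ hρ
  calc ν i (ball z ρ) ≤ c * μ (ball z (2 * ρ)) := hle z ρ hρ
    _ ≤ c * (K * ENNReal.ofReal ((2 * ρ / (2 * r)) ^ s) * μ (ball z (2 * r))) := by
        gcongr
        exact hKr z (2 * ρ) ⟨by linarith [hρ.1], by linarith [hρ.2]⟩
    _ ≤ c * (K * ENNReal.ofReal ((2 * ρ / (2 * r)) ^ s) * μ (ball x (4 * r))) := by
        gcongr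
        exact ball_subset_ball' (by rw [dist_comm]; linarith)
    _ ≤ c * (K * ENNReal.ofReal ((2 * ρ / (2 * r)) ^ s) * (D * (c * ν i (ball x r)))) := by
        gcongr
        exact (hDr x).trans (by gcongr; exact hge x)
    _ = _ := by
        rw [mul_div_mul_left _ _ two_ne_zero]
        push_cast
        ring

end LowerHomogeneity

section Redistribution

variable {X : Type*} [PseudoMetricSpace X] [MeasurableSpace X]

/-- Spread the mass that `lam` puts at each point `x` over `ball x r`, proportionally to `ν`.
Mass at points `x` with `ν (ball x r) = 0` is lost. -/
noncomputable def redistribute (lam ν : Measure X) (r : ℝ) : Measure X :=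
  lam.bind fun x => ProbabilityTheory.cond ν (ball x r)

variable [SecondCountableTopology X] [BorelSpace X] (lam ν : Measure X) [SFinite ν] (r : ℝ)

theorem measurable_cond_ball : Measurable fun x => ProbabilityTheory.cond ν (ball x r) := by
  refine Measure.measurable_of_measurable_coe _ fun S hS => ?_
  have hopen : MeasurableSet {p : X × X | dist p.2 p.1 < r} :=
    (isOpen_lt (by fun_prop) continuous_const).measurableSet
  have hball : Measurable fun x => ν (ball x r) := measurable_measure_prodMk_left hopen
  have hinter : Measurable fun x => ν (ball x r ∩ S) :=
    measurable_measure_prodMk_left (hopen.inter (measurable_snd hS))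
  simp_rw [ProbabilityTheory.cond_apply' hS]
  exact hball.inv.mul hinter

theorem redistribute_apply {S : Set X} (hS : MeasurableSet S) :
    redistribute lam ν r S = ∫⁻ x, (ν (ball x r))⁻¹ * ν (ball x r ∩ S) ∂lam := by
  rw [redistribute, Measure.bind_apply hS (measurable_cond_ball ν r).aemeasurable]
  simp_rw [ProbabilityTheory.cond_apply' hS]

theorem redistribute_absolutelyContinuous : redistribute lam ν r ≪ ν :=
  Measure.AbsolutelyContinuous.mk fun S hS hνS => by
    simp [redistribute_apply lam ν r hS, measure_mono_null inter_subset_right hνS]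

theorem isProbabilityMeasure_redistribute [IsProbabilityMeasure lam] [IsFiniteMeasure ν] {r : ℝ}
    (hpos : ∀ x, ν (ball x r) ≠ 0) : IsProbabilityMeasure (redistribute lam ν r) := by
  constructor
  simp_rw [redistribute_apply lam ν r MeasurableSet.univ, inter_univ,
    ENNReal.inv_mul_cancel (hpos _) (measure_ne_top ν _), lintegral_one, measure_univ]

variable {r}

theorem redistribute_le_mul_thickening {S : Set X} (hS : MeasurableSet S) {k : ℝ≥0∞}
    (hk : ∀ x ∈ thickening r S, (ν (ball x r))⁻¹ * ν (ball x r ∩ S) ≤ k) :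
    redistribute lam ν r S ≤ k * lam (thickening r S) := by
  rw [redistribute_apply lam ν r hS,
    ← lintegral_indicator_const isOpen_thickening.measurableSet]
  refine lintegral_mono fun x => ?_
  by_cases hx : x ∈ thickening r S
  · simpa only [indicator_of_mem hx] using hk x hx
  · have hempty : ball x r ∩ S = ∅ := eq_empty_of_forall_notMem fun y hy =>
      hx (mem_thickening_iff.2 ⟨y, hy.2, mem_ball'.1 hy.1⟩)
    simp [hempty]

theorem redistribute_le_thickening {S : Set X} (hS : MeasurableSet S) :
    redistribute lam ν r S ≤ lam (thickening r S) := by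
  simpa only [one_mul] using redistribute_le_mul_thickening lam ν hS fun x _ =>
    (by gcongr; exact inter_subset_left :
      (ν (ball x r))⁻¹ * ν (ball x r ∩ S) ≤ (ν (ball x r))⁻¹ * ν (ball x r)).trans
      (ENNReal.inv_mul_le_one _)

theorem redistribute_ball_le (z : X) (ρ : ℝ) :
    redistribute lam ν r (ball z ρ) ≤ lam (ball z (r + ρ)) :=
  (redistribute_le_thickening lam ν measurableSet_ball).trans
    (measure_mono (thickening_ball z r ρ))

theorem redistribute_ball_le_mul (z : X) (ρ : ℝ) {k : ℝ≥0∞}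
    (hk : ∀ x, dist x z < r + ρ → ν (ball z ρ) ≤ k * ν (ball x r)) :
    redistribute lam ν r (ball z ρ) ≤ k * lam (ball z (r + ρ)) := by
  refine (redistribute_le_mul_thickening lam ν measurableSet_ball fun x hx => ?_).trans
    (by gcongr; exact thickening_ball z r ρ)
  calc (ν (ball x r))⁻¹ * ν (ball x r ∩ ball z ρ) ≤ (ν (ball x r))⁻¹ * (k * ν (ball x r)) := by
        gcongr
        exact (measure_mono inter_subset_right).trans (hk x (thickening_ball z r ρ hx))
    _ = k * ((ν (ball x r))⁻¹ * ν (ball x r)) := by ring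
    _ ≤ k := mul_le_of_le_one_right' (ENNReal.inv_mul_le_one _)

variable {lam ν}

theorem hasBallBound_redistribute [IsProbabilityMeasure lam] {C s : ℝ} (hν : HasBallBound ν C s)
    {b : ℝ≥0∞} (hb : b ≠ 0) (hbν : ∀ x, b ≤ ν (ball x r)) :
    HasBallBound (redistribute lam ν r) (b⁻¹.toReal * C) s := by
  intro z ρ hρ
  calc redistribute lam ν r (ball z ρ)
      ≤ b⁻¹ * ENNReal.ofReal (C * ρ ^ s) * lam (thickening r (ball z ρ)) := by
        refine redistribute_le_mul_thickening lam ν measurableSet_ball fun x _ => ?_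
        gcongr
        · exact hbν x
        · exact (measure_mono inter_subset_right).trans (hν z ρ hρ)
    _ ≤ b⁻¹ * ENNReal.ofReal (C * ρ ^ s) := mul_le_of_le_one_right' prob_le_one
    _ = ENNReal.ofReal (b⁻¹.toReal * C * ρ ^ s) := by
        rw [mul_assoc, ENNReal.ofReal_mul ENNReal.toReal_nonneg,
          ENNReal.ofReal_toReal (ENNReal.inv_ne_top.2 hb)]

end Redistribution

section AsymptoticBallBound

variable {X : Type*} [PseudoMetricSpace X] [MeasurableSpace X] {lam : Measure X} {A m M s t : ℝ}

theorem HasBallBound.eventually_measure_ball_add_le [NeZero lam] (hs : HasBallBound lam A s)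
    (ht : HasBallBound lam m t) (ht₀ : 0 ≤ t) (hts : t < s) (hmM : m < M) :
    ∀ᶠ r : ℝ in 𝓝[>] 0, ∀ z, ∀ ρ ≥ r, lam (ball z (r + ρ)) ≤ ENNReal.ofReal (M * ρ ^ t) := by
  have hA : 0 < A := hs.pos (NeZero.ne lam)
  have hm : 0 < m := ht.pos (NeZero.ne lam)
  obtain ⟨σ, hσ, hsmall⟩ := exists_forall_mul_rpow_le_mul_rpow hts (A * 2 ^ s) (hm.trans hmM)
  have hlarge : ∀ᶠ r : ℝ in 𝓝[>] 0, m * (r / σ + 1) ^ t ≤ M := by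
    have hcont : Continuous fun r : ℝ => m * (r / σ + 1) ^ t :=
      continuous_const.mul ((by fun_prop : Continuous fun r : ℝ => r / σ + 1).rpow_const
        fun _ => Or.inr ht₀)
    exact nhdsWithin_le_nhds ((hcont.tendsto 0).eventually_le_const (by simpa using hmM))
  filter_upwards [hlarge, self_mem_nhdsWithin] with r hrM hr z ρ hρ
  have hr : 0 < r := hr
  have hρ₀ : 0 < ρ := hr.trans_le hρ
  rcases le_or_gt ρ σ with hρσ | hσρ
  · refine (hs z (r + ρ) (by positivity)).trans (ENNReal.ofReal_le_ofReal ?_)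
    calc A * (r + ρ) ^ s ≤ A * (2 * ρ) ^ s := by
          have : 0 ≤ s := ht₀.trans hts.le
          gcongr; linarith
      _ = A * 2 ^ s * ρ ^ s := by rw [Real.mul_rpow two_pos.le hρ₀.le, mul_assoc]
      _ ≤ M * ρ ^ t := hsmall ρ ⟨hρ₀, hρσ⟩
  · refine (ht z (r + ρ) (by positivity)).trans (ENNReal.ofReal_le_ofReal ?_)
    have hrρ : r ≤ r / σ * ρ := by
      rw [div_mul_eq_mul_div, le_div_iff₀ hσ]
      gcongr
    calc m * (r + ρ) ^ t ≤ m * ((r / σ + 1) * ρ) ^ t := by gcongr; linarith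
      _ = m * (r / σ + 1) ^ t * ρ ^ t := by rw [Real.mul_rpow (by positivity) hρ₀.le, mul_assoc]
      _ ≤ M * ρ ^ t := by gcongr

variable [SecondCountableTopology X] [BorelSpace X]

theorem HasBallBound.redistribute_ball_le {ν : Measure X} [SFinite ν] (hlam : HasBallBound lam A s)
    {K : ℝ≥0} {r ρ : ℝ} (hρ : 0 < ρ) (hρr : ρ ≤ r) (z : X)
    (hν : ∀ x, dist x z ≤ 2 * r →
      ν (ball z ρ) ≤ K * ENNReal.ofReal ((ρ / r) ^ s) * ν (ball x r)) :
    redistribute lam ν r (ball z ρ) ≤ ENNReal.ofReal (K * A * 2 ^ s * ρ ^ s) := by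
  have hr : 0 < r := hρ.trans_le hρr
  calc redistribute lam ν r (ball z ρ)
      ≤ K * ENNReal.ofReal ((ρ / r) ^ s) * lam (ball z (r + ρ)) :=
        redistribute_ball_le_mul lam ν z ρ fun x hx => hν x (by linarith)
    _ ≤ K * ENNReal.ofReal ((ρ / r) ^ s) * ENNReal.ofReal (A * (2 * r) ^ s) := by
        gcongr
        exact (measure_mono (ball_subset_ball (by linarith))).trans (hlam z (2 * r) (by positivity))
    _ = ENNReal.ofReal (K * A * 2 ^ s * ρ ^ s) := by
        rw [← ENNReal.ofReal_coe_nnreal, ← ENNReal.ofReal_mul (by positivity),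
          ← ENNReal.ofReal_mul (by positivity), Real.mul_rpow two_pos.le hr.le,
          Real.div_rpow hρ.le hr.le]
        congr 1
        field_simp

theorem AsymptoticallyLowerHomogeneous.eventually_hasBallBound_redistribute
    [IsProbabilityMeasure lam] {ι : Type*} {l : Filter ι} {ν : ι → Measure X} [∀ i, SFinite (ν i)]
    {K : ℝ≥0} {C : ℝ}
    (hν : AsymptoticallyLowerHomogeneous ν l K s) (hνC : ∀ i, HasBallBound (ν i) C s)
    (hlow : ∀ r > 0, ∃ b > 0, ∀ᶠ i in l, ∀ x, b ≤ ν i (ball x r)) (hs : HasBallBound lam A s)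
    (ht : HasBallBound lam m t) (ht₀ : 0 ≤ t) (hts : t < s) (hmM : m < M) :
    ∀ᶠ r in 𝓝[>] (0 : ℝ), ∀ᶠ i in l, HasBallBound (redistribute lam (ν i) r) M t := by
  have hM : 0 < M := (ht.pos (IsProbabilityMeasure.ne_zero lam)).trans hmM
  obtain ⟨σ, hσ, hmiddle⟩ := exists_forall_mul_rpow_le_mul_rpow hts (K * A * 2 ^ s) hM
  filter_upwards [hν, hs.eventually_measure_ball_add_le ht ht₀ hts hmM, Ioc_mem_nhdsGT hσ]
    with r hνr hlarge hr
  obtain ⟨b, hb, hbν⟩ := hlow r hr.1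
  obtain ⟨τ, hτ, hsmall⟩ := exists_forall_mul_rpow_le_mul_rpow hts (b⁻¹.toReal * C) hM
  filter_upwards [hνr τ hτ, hbν] with i hνi hbi z ρ hρ
  rcases le_total r ρ with hrρ | hρr
  · exact (redistribute_ball_le lam (ν i) z ρ).trans (hlarge z ρ hrρ)
  rcases le_total τ ρ with hτρ | hρτ
  · exact (hs.redistribute_ball_le hρ hρr z fun x hx =>
      hνi x z hx ρ ⟨hτρ, hρr⟩).trans
        (ENNReal.ofReal_le_ofReal (hmiddle ρ ⟨hρ, hρr.trans hr.2⟩))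
  · exact (hasBallBound_redistribute (hνC i) hb.ne' hbi z ρ hρ).trans
      (ENNReal.ofReal_le_ofReal (hsmall ρ ⟨hρ, hρτ⟩))

end AsymptoticBallBound

section WeakConvergence

variable {X : Type*} [PseudoMetricSpace X] [MeasurableSpace X] [BorelSpace X]

theorem tendsto_of_eventually_le_thickening {ι : Type*} {l : Filter ι}
    [l.IsCountablyGenerated] {r : ι → ℝ}
    (hr : Tendsto r l (𝓝 0)) {κ : ι → ProbabilityMeasure X} {lam : ProbabilityMeasure X}
    (h : ∀ᶠ i in l, ∀ F, IsClosed F →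
      (κ i : Measure X) F ≤ (lam : Measure X) (thickening (r i) F)) :
    Tendsto κ l (𝓝 lam) := by
  refine tendsto_of_forall_isClosed_limsup_le' fun F hF => ?_
  have hlim : Tendsto (fun i => (lam : Measure X) (cthickening (r i) F)) l
      (𝓝 ((lam : Measure X) F)) :=
    (tendsto_measure_cthickening_of_isClosed ⟨1, one_pos, measure_ne_top _ _⟩ hF).comp hr
  rcases l.eq_or_neBot with rfl | hl
  · simp
  rw [← hlim.limsup_eq]
  exact limsup_le_limsup <| h.mono fun i hi =>
    (hi F hF).trans (measure_mono (thickening_subset_cthickening _ _))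

theorem lowerSemicontinuous_probabilityMeasure_apply {U : Set X} (hU : IsOpen U) :
    LowerSemicontinuous fun lam : ProbabilityMeasure X => (lam : Measure X) U :=
  fun _ _ hc => eventually_lt_of_lt_liminf <|
    hc.trans_le (ProbabilityMeasure.le_liminf_measure_open_of_tendsto tendsto_id hU)

theorem isGδ_setOf_measure_eq_one {U : Set X} (hU : IsOpen U) :
    IsGδ {lam : ProbabilityMeasure X | (lam : Measure X) U = 1} := by
  obtain ⟨u, -, hu, hlim⟩ := exists_seq_strictMono_tendsto' (zero_lt_one' ℝ≥0∞)
  have hinter : {lam : ProbabilityMeasure X | (lam : Measure X) U = 1} =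
      ⋂ k, {lam : ProbabilityMeasure X | u k < (lam : Measure X) U} := by
    ext lam
    simp only [mem_ofPred_eq, mem_iInter]
    exact ⟨fun h k => (hu k).2.trans_eq h.symm,
      fun h => le_antisymm prob_le_one (le_of_tendsto' hlim fun k => (h k).le)⟩
  rw [hinter]
  exact IsGδ.iInter_of_isOpen fun k =>
    (lowerSemicontinuous_probabilityMeasure_apply hU).isOpen_preimage (u k)

theorem isClosed_setOf_hasBallBound (A s : ℝ) :
    IsClosed {lam : ProbabilityMeasure X | HasBallBound (lam : Measure X) A s} := by
  simp only [HasBallBound, ofPred_forall]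
  exact isClosed_iInter fun x => isClosed_iInter fun r => isClosed_iInter fun _ =>
    (lowerSemicontinuous_probabilityMeasure_apply isOpen_ball).isClosed_preimage _

theorem exists_mem_closure_measure_limsup_eq_one {X : Type*} [MetricSpace X] [CompactSpace X]
    [MeasurableSpace X] [BorelSpace X] {E : ℕ → Set X} (hE : ∀ n, IsOpen (E n))
    {T : Set (ProbabilityMeasure X)} (hT : T.Nonempty)
    (hdense : ∀ N, T ⊆ closure {lam ∈ T | ∃ n ≥ N, (lam : Measure X) (E n)ᶜ = 0}) :
    ∃ lam ∈ closure T, (lam : Measure X) (limsup E atTop) = 1 := by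
  set U : ℕ → Set X := fun N => ⋃ n ≥ N, E n
  have hU : ∀ N, IsOpen (U N) := fun N => isOpen_biUnion fun n _ => hE n
  have hcpt : CompactSpace (closure T) := isCompact_iff_compactSpace.1 isClosed_closure.isCompact
  have hne : Nonempty (closure T) := hT.closure.to_subtype
  have hbaire : Dense (⋂ N, ((↑) : closure T → ProbabilityMeasure X) ⁻¹'
      {lam | (lam : Measure X) (U N) = 1}) := by
    refine dense_iInter_of_Gδ
      (fun N => (isGδ_setOf_measure_eq_one (hU N)).preimage continuous_subtype_val) fun N => ?_
    refine Subtype.dense_iff.2 <|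
      closure_minimal ((hdense N).trans (closure_mono ?_)) isClosed_closure
    rintro lam ⟨hlam, n, hn, hnull⟩
    refine ⟨⟨lam, subset_closure hlam⟩, ?_, rfl⟩
    exact (prob_compl_eq_zero_iff (hU N).measurableSet).1 <| measure_mono_null
      (compl_subset_compl.2 (subset_biUnion_of_mem (u := E) hn)) hnull
  obtain ⟨⟨lam, hlam⟩, hone⟩ := hbaire.nonempty
  have hlimsup : limsup E atTop = ⋂ N, U N := limsup_eq_iInf_iSup_of_nat
  refine ⟨lam, hlam, ?_⟩
  rw [hlimsup, ← prob_compl_eq_zero_iff (MeasurableSet.iInter fun N => (hU N).measurableSet),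
    compl_iInter, measure_iUnion_null_iff]
  exact fun N => (prob_compl_eq_zero_iff (hU N).measurableSet).2 (mem_iInter.1 hone N)

end WeakConvergence

section BallBoundedMeasures

/-- The class of probability measures to which the Baire category argument applies. The exponent
`s` bound has no prescribed constant and is lost in the weak closure; the constant `M` of the
exponent `t` bound survives there, and the strict inequality leaves room for moving mass. -/
def ballBoundedMeasures (X : Type*) [PseudoMetricSpace X] [MeasurableSpace X] (s t M : ℝ) :
    Set (ProbabilityMeasure X) :=
  {lam | (∃ A, HasBallBound (lam : Measure X) A s) ∧ ∃ m < M, HasBallBound (lam : Measure X) m t}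

variable {X : Type*} [PseudoMetricSpace X] [MeasurableSpace X] [BorelSpace X] {s t M : ℝ}

theorem hasBallBound_of_mem_closure_ballBoundedMeasures {lam : ProbabilityMeasure X}
    (hlam : lam ∈ closure (ballBoundedMeasures X s t M)) :
    HasBallBound (lam : Measure X) M t := by
  refine closure_minimal ?_ (isClosed_setOf_hasBallBound M t) hlam
  rintro κ ⟨-, m, hmM, hm⟩
  exact hm.mono_const hmM.le

theorem ballBoundedMeasures_subset_closure [SecondCountableTopology X] {ι : Type*}
    {l : Filter ι} [l.NeBot] {ν : ι → Measure X} [∀ i, IsProbabilityMeasure (ν i)] {K : ℝ≥0} {C : ℝ}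
    (hν : AsymptoticallyLowerHomogeneous ν l K s) (hνC : ∀ i, HasBallBound (ν i) C s)
    (hlow : ∀ r > 0, ∃ b > 0, ∀ᶠ i in l, ∀ x, b ≤ ν i (ball x r)) (ht₀ : 0 ≤ t) (hts : t < s)
    {p : ι → Prop} (hp : ∀ᶠ i in l, p i) :
    ballBoundedMeasures X s t M ⊆
      closure {lam ∈ ballBoundedMeasures X s t M | ∃ i, p i ∧ (lam : Measure X) ≪ ν i} := by
  rintro lam ⟨⟨A, hA⟩, m, hmM, hm⟩
  have hmove : ∀ᶠ r in 𝓝[>] (0 : ℝ), ∃ lam' : ProbabilityMeasure X,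
      (lam' ∈ ballBoundedMeasures X s t M ∧ ∃ i, p i ∧ (lam' : Measure X) ≪ ν i) ∧
      ∀ F, IsClosed F → (lam' : Measure X) F ≤ (lam : Measure X) (thickening r F) := by
    filter_upwards [hν.eventually_hasBallBound_redistribute hνC hlow hA hm ht₀ hts
      (left_lt_add_div_two.2 hmM), self_mem_nhdsWithin] with r hr hr₀
    obtain ⟨b, hb, hbν⟩ := hlow r hr₀
    obtain ⟨i, hi, hbi, hpi⟩ := (hr.and (hbν.and hp)).exists
    refine ⟨⟨redistribute lam (ν i) r, isProbabilityMeasure_redistribute _ _ fun x =>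
        (hb.trans_le (hbi x)).ne'⟩,
      ⟨⟨⟨_, hasBallBound_redistribute (hνC i) hb.ne' hbi⟩, _, add_div_two_lt_right.2 hmM, hi⟩,
        i, hpi, redistribute_absolutelyContinuous _ _ r⟩,
      fun F hF => redistribute_le_thickening _ _ hF.measurableSet⟩
  obtain ⟨κ, hκ⟩ := hmove.choice
  exact mem_closure_of_tendsto
    (tendsto_of_eventually_le_thickening (tendsto_id.mono_left nhdsWithin_le_nhds)
      (hκ.mono fun _ h => h.2)) (hκ.mono fun _ h => h.1)

end BallBoundedMeasures

theorem statement12_general {X : Type*} [MetricSpace X] [CompactSpace X] [MeasurableSpace X]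
    [BorelSpace X] {μ : Measure X} [IsUnifLocDoublingMeasure μ] {s : ℝ}
    (hμ : IsUnifLocLowerHomogeneous μ s) {E : ℕ → Set X} (hE : ∀ n, IsOpen (E n))
    {ν : ℕ → Measure X} [∀ n, IsProbabilityMeasure (ν n)] (hνE : ∀ n, ν n (E n)ᶜ = 0) {c : ℝ≥0}
    (hνμ : EventuallyComparableOnBalls ν μ c atTop) {C : ℝ}
    (hνC : ∀ n, HasBallBound (ν n) C s) : ENNReal.ofReal s ≤ dimH (limsup E atTop) := by
  refine ENNReal.le_of_forall_nnreal_lt fun t ht => ?_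
  have hts : (t : ℝ) < s := by
    simpa using (ENNReal.lt_ofReal_iff_toReal_lt ENNReal.coe_ne_top).1 ht
  obtain ⟨K, hK⟩ := hνμ.exists_asymptoticallyLowerHomogeneous hμ
  set T := ballBoundedMeasures X s t (max C 1 + 1)
  have hT : T.Nonempty :=
    ⟨⟨ν 0, inferInstance⟩, ⟨C, hνC 0⟩, _, lt_add_one _, (hνC 0).mono_exponent t.2 hts.le⟩
  have hdense : ∀ N, T ⊆ closure {lam ∈ T | ∃ n ≥ N, (lam : Measure X) (E n)ᶜ = 0} := fun N =>
    (ballBoundedMeasures_subset_closure hK hνC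
      (fun _ => hνμ.exists_pos_eventually_forall_le_measure_ball) t.2 hts
      (eventually_ge_atTop N)).trans <|
        closure_mono fun _ ⟨hlam, n, hn, hac⟩ => ⟨hlam, n, hn, hac (hνE n)⟩
  obtain ⟨lam, hlam, hone⟩ := exists_mem_closure_measure_limsup_eq_one hE hT hdense
  exact (hasBallBound_of_mem_closure_ballBoundedMeasures hlam).le_dimH (by simp [hone])

section AhlforsRegular

variable {X : Type*} [PseudoMetricSpace X] [MeasurableSpace X] {μ : Measure X} {δ s : ℝ}

/-- Ahlfors `δ`-regularity at small scales. The constants `c₁ ≤ 1 ≤ c₂` are normalised as in the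
literature. -/
def IsAhlforsRegular (μ : Measure X) (δ : ℝ) : Prop :=
  ∃ c₁ c₂ r₀ : ℝ, 0 < c₁ ∧ c₁ ≤ 1 ∧ 1 ≤ c₂ ∧ 0 < r₀ ∧
    ∀ (x : X) (r : ℝ), 0 < r → r ≤ r₀ →
      ENNReal.ofReal (c₁ * r ^ δ) ≤ μ (ball x r) ∧
        μ (ball x r) ≤ ENNReal.ofReal (c₂ * r ^ δ)

namespace IsAhlforsRegular

theorem exists_measure_ball_le_mul (h : IsAhlforsRegular μ δ) :
    ∃ K : ℝ≥0, ∃ r₀ > 0, ∀ (x y : X), ∀ ρ ∈ Ioc 0 r₀, ∀ r ∈ Ioc 0 r₀,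
      μ (ball x ρ) ≤ K * ENNReal.ofReal ((ρ / r) ^ δ) * μ (ball y r) := by
  obtain ⟨c₁, c₂, r₀, hc₁, -, hc₂, hr₀, hμ⟩ := h
  refine ⟨(c₂ / c₁).toNNReal, r₀, hr₀, fun x y ρ hρ r hr => ?_⟩
  have hρ₀ : 0 < ρ := hρ.1
  have hr₁ : 0 < r := hr.1
  calc μ (ball x ρ) ≤ ENNReal.ofReal (c₂ * ρ ^ δ) := (hμ x ρ hρ.1 hρ.2).2
    _ = ENNReal.ofReal (c₂ / c₁) * ENNReal.ofReal ((ρ / r) ^ δ) * ENNReal.ofReal (c₁ * r ^ δ) := by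
        rw [← ENNReal.ofReal_mul (by positivity), ← ENNReal.ofReal_mul (by positivity),
          Real.div_rpow hρ₀.le hr₁.le]
        congr 1
        field_simp
    _ ≤ ENNReal.ofReal (c₂ / c₁) * ENNReal.ofReal ((ρ / r) ^ δ) * μ (ball y r) := by
        gcongr
        exact (hμ y r hr.1 hr.2).1

theorem isUnifLocDoublingMeasure (h : IsAhlforsRegular μ δ) : IsUnifLocDoublingMeasure μ := by
  obtain ⟨K, r₀, hr₀, hK⟩ := h.exists_measure_ball_le_mul
  refine ⟨K * ((3 : ℝ) ^ δ).toNNReal, ?_⟩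
  filter_upwards [Ioc_mem_nhdsGT (by positivity : 0 < r₀ / 3)] with r hr x
  have hr₁ : 0 < r := hr.1
  calc μ (closedBall x (2 * r)) ≤ μ (ball x (3 * r)) := by
        gcongr; exact closedBall_subset_ball (by linarith)
    _ ≤ K * ENNReal.ofReal ((3 * r / r) ^ δ) * μ (ball x r) :=
        hK x x _ ⟨by positivity, by linarith [hr.2]⟩ r ⟨hr₁, by linarith [hr.2]⟩
    _ ≤ _ := by
        rw [mul_div_cancel_right₀ _ hr₁.ne', ENNReal.coe_mul]
        gcongr
        · rfl
        · exact ball_subset_closedBall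

theorem isUnifLocLowerHomogeneous (h : IsAhlforsRegular μ δ) (hsδ : s ≤ δ) :
    IsUnifLocLowerHomogeneous μ s := by
  obtain ⟨K, r₀, hr₀, hK⟩ := h.exists_measure_ball_le_mul
  refine ⟨K, ?_⟩
  filter_upwards [Ioc_mem_nhdsGT hr₀] with r hr x ρ hρ
  refine (hK x x ρ ⟨hρ.1, hρ.2.trans hr.2⟩ r hr).trans ?_
  gcongr _ * ENNReal.ofReal ?_ * _
  exact Real.rpow_le_rpow_of_exponent_ge (div_pos hρ.1 hr.1) ((div_le_one hr.1).2 hρ.2) hsδ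

theorem le_of_hasBallBound [Nonempty X] {ι : Type*} {l : Filter ι} [l.NeBot] {ν : ι → Measure X}
    {c : ℝ≥0} {C : ℝ} (h : IsAhlforsRegular μ δ) (hνμ : EventuallyComparableOnBalls ν μ c l)
    (hνC : ∀ i, HasBallBound (ν i) C s) : s ≤ δ := by
  obtain ⟨c₁, c₂, r₀, hc₁, -, -, hr₀, hμ⟩ := h
  obtain ⟨x⟩ := ‹Nonempty X›
  refine le_of_eventually_mul_rpow_le (A := c * C) hc₁ ?_
  filter_upwards [Ioc_mem_nhdsGT hr₀] with r hr
  obtain ⟨i, hi⟩ := (hνμ.ge x r hr.1).exists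
  have hlow : 0 < c₁ * r ^ δ := mul_pos hc₁ (Real.rpow_pos_of_pos hr.1 δ)
  have hle : ENNReal.ofReal (c₁ * r ^ δ) ≤ ENNReal.ofReal (c * C * r ^ s) :=
    calc ENNReal.ofReal (c₁ * r ^ δ) ≤ μ (ball x r) := (hμ x r hr.1 hr.2).1
      _ ≤ c * ENNReal.ofReal (C * r ^ s) := hi.trans (by gcongr; exact hνC i x r hr.1)
      _ = ENNReal.ofReal (c * C * r ^ s) := by
          rw [mul_assoc, ENNReal.ofReal_mul c.coe_nonneg, ENNReal.ofReal_coe_nnreal]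
  exact (ENNReal.ofReal_le_ofReal_iff'.1 hle).resolve_right hlow.not_ge

end IsAhlforsRegular

end AhlforsRegular

/-- A lower bound for the Hausdorff dimension of a limsup of open sets
carrying suitably comparable probability measures on a compact Ahlfors regular space. -/
theorem statement12 {X : Type*} [MetricSpace X] [CompactSpace X]
    [MeasurableSpace X] [BorelSpace X]
    (μ : Measure X) (δ₀ : ℝ)
    (hreg : ∃ c₁ c₂ r₀ : ℝ, 0 < c₁ ∧ c₁ ≤ 1 ∧ 1 ≤ c₂ ∧ 0 < r₀ ∧
      ∀ (x : X) (r : ℝ), 0 < r → r ≤ r₀ →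
        ENNReal.ofReal (c₁ * r ^ δ₀) ≤ μ (ball x r) ∧
          μ (ball x r) ≤ ENNReal.ofReal (c₂ * r ^ δ₀))
    (E : ℕ → Set X) (hEopen : ∀ n, IsOpen (E n))
    (μn : ℕ → Measure X) (hprob : ∀ n, IsProbabilityMeasure (μn n))
    (hsupp : ∀ n, μn n (univ \ E n) = 0)
    (C s : ℝ) (hC : 1 ≤ C) (hs : 0 ≤ s)
    (hcomp : ∀ (x : X) (r : ℝ), 0 < r →
      (ENNReal.ofReal C)⁻¹ ≤ atTop.liminf (fun n => μn n (ball x r) / μ (ball x r)) ∧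
        atTop.limsup (fun n => μn n (ball x r) / μ (ball x r)) ≤ ENNReal.ofReal C)
    (hholder : ∀ (n : ℕ) (x : X) (r : ℝ), 0 < r →
      μn n (ball x r) ≤ ENNReal.ofReal (C * r ^ s)) :
    ENNReal.ofReal s ≤ dimH (atTop.limsup E) := by
  have hμ : IsAhlforsRegular μ δ₀ := hreg
  have hνμ := EventuallyComparableOnBalls.of_liminf_limsup C.toNNReal hcomp
  have hX : Nonempty X := nonempty_of_isProbabilityMeasure (μn 0)
  have hdoubling : IsUnifLocDoublingMeasure μ := hμ.isUnifLocDoublingMeasure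
  exact statement12_general (hμ.isUnifLocLowerHomogeneous (hμ.le_of_hasBallBound hνμ hholder))
    hEopen (fun n => compl_eq_univ_sdiff (E n) ▸ hsupp n) hνμ hholder
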